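/- arXiv:1007.5226 — 4 statements merged into one kernel-verified Lean document; each statement's English description precedes it below -/
import Mathlib

section
/- Let 𝒦 ⊂ ℝ² and ℛ ⊂ ℝ² be bounded measurable sets and λ ∈ ℝ. Suppose G : ℝ² → ℂ is integrable, vanishes outside 𝒦, and satisfies the spectral-domain Fredholm equation ∫_𝒦 D(k,k') G(k') dk' = λ G(k) for almost every k ∈ 𝒦, where D(k,k') = (2π)^{-2} ∫_ℛ e^{i(k'−k)·x} dx. Then the bandlimited function g(x) = (2π)^{-2} ∫_𝒦 G(k) e^{i k·x} dk satisfies the spatial-domain Fredholm equation ∫_ℛ D(x,x') g(x') dx' = λ g(x) for every x ∈ ℝ², where D(x,x') = (2π)^{-2} ∫_𝒦 e^{i k·(x−x')} dk. -/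
open MeasureTheory Real Complex
open scoped RealInnerProductSpace

noncomputable section

/-- If `G`, integrable and supported in the bounded measurable set `𝒦`, solves
the spectral-domain Fredholm equation `∫_𝒦 D(k,k') G(k') dk' = λ G(k)` for a.e. `k ∈ 𝒦`,
with `D(k,k') = (2π)⁻² ∫_ℛ e^{i(k'-k)·x} dx`, then the bandlimited function
`g(x) = (2π)⁻² ∫_𝒦 G(k) e^{i k·x} dk` solves the spatial-domain Fredholm equation
`∫_ℛ D(x,x') g(x') dx' = λ g(x)` for every `x ∈ ℝ²`, where
`D(x,x') = (2π)⁻² ∫_𝒦 e^{i k·(x-x')} dk`. -/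
theorem spectral_fredholm_implies_spatial_fredholm
    (𝒦 ℛ : Set (EuclideanSpace ℝ (Fin 2)))
    (h𝒦b : Bornology.IsBounded 𝒦) (h𝒦m : MeasurableSet 𝒦)
    (hℛb : Bornology.IsBounded ℛ) (hℛm : MeasurableSet ℛ)
    (lam : ℝ)
    (G : EuclideanSpace ℝ (Fin 2) → ℂ)
    (hGint : Integrable G)
    (hGsupp : ∀ k, k ∉ 𝒦 → G k = 0)
    (Dspec : EuclideanSpace ℝ (Fin 2) → EuclideanSpace ℝ (Fin 2) → ℂ)
    (hDspec : ∀ k k', Dspec k k' = (((2 * π) ^ 2 : ℝ))⁻¹ •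
      ∫ x in ℛ, Complex.exp (Complex.I * (⟪k' - k, x⟫ : ℝ)))
    (hFred : ∀ᵐ k ∂(volume.restrict 𝒦),
      ∫ k' in 𝒦, Dspec k k' * G k' = (lam : ℂ) * G k)
    (g : EuclideanSpace ℝ (Fin 2) → ℂ)
    (hg : ∀ x, g x = (((2 * π) ^ 2 : ℝ))⁻¹ •
      ∫ k in 𝒦, G k * Complex.exp (Complex.I * (⟪k, x⟫ : ℝ)))
    (Dspat : EuclideanSpace ℝ (Fin 2) → EuclideanSpace ℝ (Fin 2) → ℂ)
    (hDspat : ∀ x x', Dspat x x' = (((2 * π) ^ 2 : ℝ))⁻¹ •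
      ∫ k in 𝒦, Complex.exp (Complex.I * (⟪k, x - x'⟫ : ℝ))) :
    ∀ x, ∫ x' in ℛ, Dspat x x' * g x' = (lam : ℂ) * g x := by
  intro x
  have : IsFiniteMeasure (volume.restrict 𝒦) := ⟨by simpa using h𝒦b.measure_lt_top⟩
  have : IsFiniteMeasure (volume.restrict ℛ) := ⟨by simpa using hℛb.measure_lt_top⟩
  set c : ℝ := (((2 * π) ^ 2 : ℝ))⁻¹ with hc
  have hnorm : ∀ t : ℝ, ‖Complex.exp (Complex.I * (t : ℂ))‖ ≤ 1 := fun t => by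
    rw [mul_comm, Complex.norm_exp_ofReal_mul_I]
  have hGK : Integrable G (volume.restrict 𝒦) := hGint.restrict
  -- integrability of the phase-weighted spectrum on the product
  have hprod : ∀ k : EuclideanSpace ℝ (Fin 2), Integrable (fun p : EuclideanSpace ℝ (Fin 2) × EuclideanSpace ℝ (Fin 2) =>
      Complex.exp (Complex.I * (⟪p.2 - k, p.1⟫ : ℝ)) * G p.2)
      ((volume.restrict ℛ).prod (volume.restrict 𝒦)) := fun k => by
    refine Integrable.bdd_mul (c := 1) (hGK.comp_snd (volume.restrict ℛ)) ?_ ?_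
    · exact Continuous.aestronglyMeasurable (by fun_prop)
    · exact Filter.Eventually.of_forall fun p => hnorm _
  have hgint : Integrable g (volume.restrict ℛ) := by
    have h := ((hprod 0).integral_prod_left).smul c
    refine h.congr (Filter.Eventually.of_forall fun y => ?_)
    simp only [Pi.smul_apply, hg, sub_zero]
    congr 1
    exact integral_congr_ae (Filter.Eventually.of_forall fun k => mul_comm _ _)
  have hprod2 : Integrable (fun p : EuclideanSpace ℝ (Fin 2) × EuclideanSpace ℝ (Fin 2) =>
      Complex.exp (Complex.I * (⟪p.2, x - p.1⟫ : ℝ)) * g p.1)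
      ((volume.restrict ℛ).prod (volume.restrict 𝒦)) := by
    refine Integrable.bdd_mul (c := 1) (hgint.comp_fst (volume.restrict 𝒦)) ?_ ?_
    · exact Continuous.aestronglyMeasurable (by fun_prop)
    · exact Filter.Eventually.of_forall fun p => hnorm _
  -- the inner integral is the spectral Fredholm operator
  have hinner : ∀ k : EuclideanSpace ℝ (Fin 2), ∫ y in ℛ, Complex.exp (Complex.I * (⟪k, x - y⟫ : ℝ)) * g y
      = Complex.exp (Complex.I * (⟪k, x⟫ : ℝ)) * ∫ k' in 𝒦, Dspec k k' * G k' := fun k => by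
    have h1 : ∀ y : EuclideanSpace ℝ (Fin 2), Complex.exp (Complex.I * (⟪k, x - y⟫ : ℝ)) * g y
        = Complex.exp (Complex.I * (⟪k, x⟫ : ℝ)) * (c •
          ∫ k' in 𝒦, Complex.exp (Complex.I * (⟪k' - k, y⟫ : ℝ)) * G k') := fun y => by
      rw [hg, mul_smul_comm, mul_smul_comm, ← integral_const_mul, ← integral_const_mul]
      congr 1
      refine integral_congr_ae (Filter.Eventually.of_forall fun k' => ?_)
      simp only
      have : Complex.exp (Complex.I * (⟪k, x - y⟫ : ℝ)) * Complex.exp (Complex.I * (⟪k', y⟫ : ℝ))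
          = Complex.exp (Complex.I * (⟪k, x⟫ : ℝ)) *
            Complex.exp (Complex.I * (⟪k' - k, y⟫ : ℝ)) := by
        rw [← Complex.exp_add, ← Complex.exp_add, inner_sub_right, inner_sub_left]
        congr 1
        push_cast
        ring
      linear_combination G k' * this
    simp_rw [h1]
    rw [integral_const_mul, integral_smul, integral_integral_swap (hprod k), ← integral_smul]
    congr 1
    refine integral_congr_ae (Filter.Eventually.of_forall fun k' => ?_)
    simp only
    rw [hDspec, integral_mul_const, smul_mul_assoc]
  have h2 : ∀ y, Dspat x y * g y
      = c • ∫ k in 𝒦, Complex.exp (Complex.I * (⟪k, x - y⟫ : ℝ)) * g y := fun y => by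
    rw [hDspat, integral_mul_const, smul_mul_assoc]
  simp_rw [h2]
  rw [integral_smul, integral_integral_swap hprod2, hg, mul_smul_comm, ← integral_const_mul]
  congr 1
  refine integral_congr_ae ?_
  filter_upwards [hFred] with k hk
  rw [hinner, hk]
  ring
end
end

section
/- Fixed-order reduction of the disk-on-disk concentration problem. Let m ∈ ℕ, K > 0, R > 0, λ ∈ ℝ, and let 𝗀 : [0,∞) → ℝ be continuous with r ↦ r·𝗀(r) integrable on [0,R], satisfying the fixed-order radial Fredholm equation ∫_0^R D_m(r,r') 𝗀(r') r' dr' = λ 𝗀(r) for every r ≥ 0, where D_m(r,r') = K² ∫_0^1 J_m(Kpr) J_m(Kpr') p dp. Then the function g : ℝ² → ℝ given in polar coordinates by g(r cos θ, r sin θ) = 𝗀(r) cos(mθ) satisfies the two-dimensional Fredholm equation ∫_{‖x'‖≤R} D(x,x') g(x') dx' = λ g(x) for every x ∈ ℝ², where D(x,x') = (2π)^{-2} ∫_{‖k‖≤K} e^{i k·(x−x')} dk. -/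
open MeasureTheory Real Complex
open scoped RealInnerProductSpace

noncomputable section

/-- Bessel function of the first kind of integer order `m`, via Bessel's integral
`J_m(z) = π⁻¹ ∫_0^π cos(mθ − z sin θ) dθ`. -/
def besselJ (m : ℤ) (z : ℝ) : ℝ :=
  π⁻¹ * ∫ θ in (0:ℝ)..π, Real.cos (m * θ - z * Real.sin θ)

/-- The point of `ℝ²` with polar coordinates `(r, θ)`. -/
def polarPt (r θ : ℝ) : EuclideanSpace ℝ (Fin 2) :=
  (EuclideanSpace.equiv (Fin 2) ℝ).symm ![r * Real.cos θ, r * Real.sin θ]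

lemma norm_polarPt (r θ : ℝ) (hr : 0 ≤ r) : ‖polarPt r θ‖ = r := by
  rw [EuclideanSpace.norm_eq]
  have h : ∑ i, ‖(polarPt r θ) i‖ ^ 2 = r ^ 2 := by
    simp only [polarPt, Fin.sum_univ_two, Real.norm_eq_abs, sq_abs]
    simp
    nlinarith [Real.sin_sq_add_cos_sq θ]
  rw [h, Real.sqrt_sq hr]

lemma exists_polarPt (x : EuclideanSpace ℝ (Fin 2)) : ∃ r θ : ℝ, 0 ≤ r ∧ x = polarPt r θ := by
  refine ⟨‖(⟨x 0, x 1⟩ : ℂ)‖, Complex.arg ⟨x 0, x 1⟩, norm_nonneg _, ?_⟩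
  ext i
  fin_cases i
  · simp [polarPt, Complex.norm_mul_cos_arg]
  · simp [polarPt, Complex.norm_mul_sin_arg]

lemma inner_polarPt (r θ s φ : ℝ) :
    (⟪polarPt r θ, polarPt s φ⟫ : ℝ) = r * s * Real.cos (θ - φ) := by
  simp [polarPt, PiLp.inner_apply, Fin.sum_univ_two, Real.cos_sub]
  ring

lemma integral_plane (f : EuclideanSpace ℝ (Fin 2) → ℂ) :
    ∫ x, f x = ∫ p in polarCoord.target, p.1 • f (polarPt p.1 p.2) := by
  rw [← (PiLp.volume_preserving_toLp (Fin 2)).integral_comp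
    (MeasurableEquiv.toLp 2 (Fin 2 → ℝ)).measurableEmbedding,
    ← ((volume_preserving_finTwoArrow ℝ).symm).integral_comp
    (MeasurableEquiv.finTwoArrow).symm.measurableEmbedding, ← integral_comp_polarCoord_symm]
  rfl

lemma integral_ball_polar (f : EuclideanSpace ℝ (Fin 2) → ℂ) (R : ℝ) (hR : 0 < R)
    (F : ℝ → ℝ → ℂ) (hF : Continuous (Function.uncurry F))
    (hfF : ∀ r ≥ (0:ℝ), ∀ θ, f (polarPt r θ) = F r θ) :
    ∫ x in Metric.closedBall 0 R, f x = ∫ r in (0:ℝ)..R, ∫ θ in (-π)..π, (r:ℂ) * F r θ := by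
  have hc : Continuous (fun p : ℝ × ℝ => (p.1:ℂ) * F p.1 p.2) := by
    have : Continuous (fun p : ℝ × ℝ => F p.1 p.2) := hF
    fun_prop
  rw [← integral_indicator Metric.isClosed_closedBall.measurableSet, integral_plane]
  have e1 : ∫ p in polarCoord.target, p.1 •
      (Metric.closedBall (0:EuclideanSpace ℝ (Fin 2)) R).indicator f (polarPt p.1 p.2)
      = ∫ p in polarCoord.target, (Set.Ioc 0 R ×ˢ Set.Ioo (-π) π).indicator
        (fun p : ℝ × ℝ => (p.1:ℂ) * F p.1 p.2) p := by
    refine setIntegral_congr_fun polarCoord.open_target.measurableSet ?_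
    rintro ⟨r, θ⟩ hp
    simp only [polarCoord_target, Set.mem_prod, Set.mem_Ioi] at hp
    have h1 : polarPt r θ ∈ Metric.closedBall (0:EuclideanSpace ℝ (Fin 2)) R ↔ r ≤ R := by
      rw [mem_closedBall_zero_iff, norm_polarPt _ _ hp.1.le]
    simp only [Set.indicator, h1, Set.mem_prod, Set.mem_Ioc, hp, true_and, and_true]
    split_ifs <;> simp [hfF r hp.1.le]
  rw [e1, setIntegral_indicator (measurableSet_Ioc.prod measurableSet_Ioo)]
  have e2 : polarCoord.target ∩ Set.Ioc 0 R ×ˢ Set.Ioo (-π) π = Set.Ioc 0 R ×ˢ Set.Ioo (-π) π := by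
    ext ⟨r, θ⟩
    simp only [polarCoord_target, Set.mem_inter_iff, Set.mem_prod, Set.mem_Ioi, Set.mem_Ioc]
    tauto
  rw [e2, Measure.volume_eq_prod, setIntegral_prod]
  · rw [intervalIntegral.integral_of_le hR.le]
    refine setIntegral_congr_fun measurableSet_Ioc fun r _ => ?_
    simp only
    rw [intervalIntegral.integral_of_le (by linarith [Real.pi_pos]), integral_Ioc_eq_integral_Ioo]
  · refine (hc.continuousOn.integrableOn_compact
      (isCompact_Icc.prod isCompact_Icc : IsCompact (Set.Icc 0 R ×ˢ Set.Icc (-π) π))).mono_set ?_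
    exact Set.prod_mono Set.Ioc_subset_Icc_self Set.Ioo_subset_Icc_self

lemma swap_cont (F : ℝ → ℝ → ℂ) (hF : Continuous (Function.uncurry F)) (a b c d : ℝ) :
    ∫ x in a..b, ∫ y in c..d, F x y = ∫ y in c..d, ∫ x in a..b, F x y := by
  apply MeasureTheory.intervalIntegral_intervalIntegral_swap
  exact (hF.continuousOn.integrableOn_compact
    (isCompact_uIcc.prod isCompact_uIcc)).mono_set
    (Set.prod_mono Set.uIoc_subset_uIcc Set.uIoc_subset_uIcc)

lemma bessel_full (m : ℤ) (z : ℝ) :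
    ∫ t in (-π)..π, cexp (I * ((z * Real.sin t - m * t : ℝ):ℂ)) = 2 * π * besselJ m z := by
  have hc : Continuous (fun t : ℝ => cexp (I * ((z * Real.sin t - m * t : ℝ):ℂ))) := by fun_prop
  rw [← intervalIntegral.integral_add_adjacent_intervals (b := 0)
    (hc.intervalIntegrable _ _) (hc.intervalIntegrable _ _)]
  have h1 : ∫ t in (-π)..0, cexp (I * ((z * Real.sin t - m * t : ℝ):ℂ))
      = ∫ t in (0:ℝ)..π, cexp (-(I * ((z * Real.sin t - m * t : ℝ):ℂ))) := by
    have := intervalIntegral.integral_comp_neg (a := 0) (b := π)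
      (fun t : ℝ => cexp (I * ((z * Real.sin t - m * t : ℝ):ℂ)))
    rw [neg_zero] at this
    rw [← this]
    congr 1; ext t; congr 1; rw [Real.sin_neg]; push_cast; ring
  have hc2 : Continuous (fun t : ℝ => cexp (-(I * ((z * Real.sin t - m * t : ℝ):ℂ)))) := by fun_prop
  rw [h1, ← intervalIntegral.integral_add (hc2.intervalIntegrable _ _) (hc.intervalIntegrable _ _)]
  have h2 : ∀ t : ℝ, cexp (-(I * ((z * Real.sin t - m * t : ℝ):ℂ))) +
      cexp (I * ((z * Real.sin t - m * t : ℝ):ℂ)) =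
      ((2 * Real.cos (m * t - z * Real.sin t) : ℝ) : ℂ) := by
    intro t
    have : m * t - z * Real.sin t = -(z * Real.sin t - m * t) := by ring
    rw [this, Real.cos_neg, Complex.ofReal_mul, Complex.ofReal_cos, Complex.ofReal_ofNat,
      Complex.two_cos, add_comm]
    congr 2 <;> ring
  simp_rw [h2]
  rw [intervalIntegral.integral_ofReal, intervalIntegral.integral_const_mul, besselJ]
  have := Real.pi_ne_zero
  push_cast
  field_simp

lemma jacobi_exp (m : ℤ) (z φ : ℝ) :
    ∫ θ in (-π)..π, cexp (I * ((z * Real.cos (θ - φ) - m * θ : ℝ):ℂ))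
      = 2 * π * cexp (I * ((m * (π / 2 - φ) : ℝ) : ℂ)) * besselJ m z := by
  set f : ℝ → ℂ := fun t => cexp (I * ((z * Real.sin t - m * t : ℝ):ℂ)) with hf
  have hper : Function.Periodic f (2 * π) := by
    intro t
    simp only [hf]
    rw [Real.sin_add_two_pi]
    have : I * ((z * Real.sin t - m * (t + 2 * π) : ℝ):ℂ) =
      I * ((z * Real.sin t - m * t : ℝ):ℂ) - m * (2 * π * I) := by push_cast; ring
    rw [this, Complex.exp_periodic.sub_int_mul_eq]
  have h1 : ∀ θ : ℝ, cexp (I * ((z * Real.cos (θ - φ) - m * θ : ℝ):ℂ)) =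
      cexp (I * ((m * (π / 2 - φ) : ℝ) : ℂ)) * f (θ + (π / 2 - φ)) := by
    intro θ
    simp only [hf]
    rw [← Complex.exp_add]
    have : θ + (π / 2 - φ) = (θ - φ) + π / 2 := by ring
    rw [this, Real.sin_add_pi_div_two]
    congr 1; push_cast; ring
  simp_rw [h1]
  rw [intervalIntegral.integral_const_mul, intervalIntegral.integral_comp_add_right f]
  have h2 := hper.intervalIntegral_add_eq (-π + (π / 2 - φ)) (-π)
  rw [show -π + (π / 2 - φ) + 2 * π = π + (π / 2 - φ) by ring,
    show -π + 2 * π = π by ring] at h2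
  rw [h2, hf, bessel_full]
  ring

lemma jacobi_cos (m : ℤ) (z φ : ℝ) :
    ∫ θ in (-π)..π, cexp (I * ((z * Real.cos (θ - φ) : ℝ):ℂ)) * (Real.cos (m * θ) : ℂ)
      = 2 * π * cexp (I * ((m * (π / 2) : ℝ) : ℂ)) * besselJ m z * (Real.cos (m * φ) : ℂ) := by
  have hm : ∫ θ in (-π)..π, cexp (I * ((z * Real.cos (θ - φ) + m * θ : ℝ):ℂ))
      = 2 * π * cexp (I * ((m * (π / 2 + φ) : ℝ) : ℂ)) * besselJ m z := by
    have h := jacobi_exp m z (-φ)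
    have h' := intervalIntegral.integral_comp_neg (a := -π) (b := π)
      (fun θ => cexp (I * ((z * Real.cos (θ - -φ) - m * θ : ℝ):ℂ)))
    rw [neg_neg] at h'
    rw [h, sub_neg_eq_add] at h'
    rw [← h']
    congr 1; ext θ
    rw [← Real.cos_neg (-θ - -φ)]
    congr 3; ring_nf
  have h1 : ∀ θ : ℝ, cexp (I * ((z * Real.cos (θ - φ) : ℝ):ℂ)) * (Real.cos (m * θ) : ℂ) =
      (1/2 : ℂ) * (cexp (I * ((z * Real.cos (θ - φ) + m * θ : ℝ):ℂ)) +
        cexp (I * ((z * Real.cos (θ - φ) - m * θ : ℝ):ℂ))) := by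
    intro θ
    rw [Complex.ofReal_cos (m * θ), Complex.cos]
    rw [show I * ((z * Real.cos (θ - φ) + m * θ : ℝ) : ℂ) =
        I * ((z * Real.cos (θ - φ) : ℝ) : ℂ) + ((m * θ : ℝ):ℂ) * I by push_cast; ring,
      show I * ((z * Real.cos (θ - φ) - m * θ : ℝ) : ℂ) =
        I * ((z * Real.cos (θ - φ) : ℝ) : ℂ) + -((m * θ : ℝ):ℂ) * I by push_cast; ring,
        Complex.exp_add, Complex.exp_add]
    ring
  simp_rw [h1]
  rw [intervalIntegral.integral_const_mul, intervalIntegral.integral_add, hm, jacobi_exp]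
  · rw [Complex.ofReal_cos, Complex.cos]
    rw [show I * ((m * (π / 2 + φ) : ℝ) : ℂ) = I * ((m * (π / 2) : ℝ) : ℂ) + ((m * φ : ℝ):ℂ) * I by
      push_cast; ring, show I * ((m * (π / 2 - φ) : ℝ) : ℂ) =
        I * ((m * (π / 2) : ℝ) : ℂ) + -((m * φ : ℝ):ℂ) * I by push_cast; ring,
        Complex.exp_add, Complex.exp_add]
    ring
  · exact Continuous.intervalIntegrable (by fun_prop) _ _
  · exact Continuous.intervalIntegrable (by fun_prop) _ _

lemma jacobi_cos_neg (m : ℤ) (z φ : ℝ) :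
    ∫ θ in (-π)..π, cexp (-(I * ((z * Real.cos (θ - φ) : ℝ):ℂ))) * (Real.cos (m * θ) : ℂ)
      = 2 * π * cexp (-(I * ((m * (π / 2) : ℝ) : ℂ))) * besselJ m z * (Real.cos (m * φ) : ℂ) := by
  have h := congrArg (starRingEnd ℂ) (jacobi_cos m z φ)
  rw [← intervalIntegral.intervalIntegral_conj] at h
  simp only [map_mul, Complex.conj_ofReal, ← Complex.exp_conj, Complex.conj_I, neg_mul,
    map_ofNat] at h
  exact h


lemma continuous_besselJ (m : ℤ) : Continuous (besselJ m) := by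
  unfold besselJ
  refine continuous_const.mul ?_
  apply intervalIntegral.continuous_parametric_intervalIntegral_of_continuous'
  simp only [Function.uncurry_def]
  fun_prop

/-- The oscillatory factor in polar coordinates. -/
def osc (r θ s t κ φ : ℝ) : ℂ :=
  cexp (I * ((κ * r * Real.cos (φ - θ) : ℝ) : ℂ)) *
    cexp (-(I * ((κ * s * Real.cos (t - φ) : ℝ) : ℂ)))

lemma osc_phi (m : ℤ) (r θ s κ : ℝ) :
    ∫ φ in (-π)..π, ∫ t in (-π)..π, osc r θ s t κ φ * (Real.cos (m * t) : ℂ) =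
      (2 * π) ^ 2 * (besselJ m (κ * r) * besselJ m (κ * s) : ℝ) * (Real.cos (m * θ) : ℂ) := by
  have h1 : ∀ φ : ℝ, ∫ t in (-π)..π, osc r θ s t κ φ * (Real.cos (m * t) : ℂ) =
      (2 * π * cexp (-(I * ((m * (π / 2) : ℝ) : ℂ))) * besselJ m (κ * s)) *
      (cexp (I * ((κ * r * Real.cos (φ - θ) : ℝ) : ℂ)) * (Real.cos (m * φ) : ℂ)) := by
    intro φ
    simp only [osc, mul_assoc (cexp (I * ((κ * r * Real.cos (φ - θ) : ℝ) : ℂ)))]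
    rw [intervalIntegral.integral_const_mul, jacobi_cos_neg]
    ring
  simp_rw [h1]
  rw [intervalIntegral.integral_const_mul, jacobi_cos]
  have h2 : cexp (-(I * ((m * (π / 2) : ℝ) : ℂ))) * cexp (I * ((m * (π / 2) : ℝ) : ℂ)) = 1 := by
    rw [← Complex.exp_add, neg_add_cancel, Complex.exp_zero]
  push_cast at h2 ⊢
  linear_combination (2 * π) ^ 2 * (besselJ m (κ * r) * besselJ m (κ * s) : ℂ)
    * (Complex.cos (m * θ)) * h2

lemma kernel_theta (m : ℤ) (K r θ s : ℝ) :
    ∫ t in (-π)..π, (∫ κ in (0:ℝ)..K, ∫ φ in (-π)..π, (κ:ℂ) * osc r θ s t κ φ)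
        * (Real.cos (m * t) : ℂ) =
      (2 * π) ^ 2 * ((K ^ 2 * ∫ p in (0:ℝ)..1, besselJ m (K * p * r) * besselJ m (K * p * s) * p
        : ℝ) : ℂ) * (Real.cos (m * θ) : ℂ) := by
  simp_rw [← intervalIntegral.integral_mul_const]
  rw [swap_cont]
  swap
  · apply intervalIntegral.continuous_parametric_intervalIntegral_of_continuous'
    simp only [Function.uncurry_def, osc]
    fun_prop
  have h1 : ∀ κ : ℝ, ∫ t in (-π)..π, ∫ φ in (-π)..π,
      (κ:ℂ) * osc r θ s t κ φ * (Real.cos (m * t) : ℂ) =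
      ((2 * π) ^ 2 * (Real.cos (m * θ) : ℂ)) *
        ((besselJ m (κ * r) * besselJ m (κ * s) * κ : ℝ) : ℂ) := by
    intro κ
    rw [swap_cont]
    swap
    · simp only [Function.uncurry_def, osc]
      fun_prop
    simp only [mul_assoc (κ:ℂ), intervalIntegral.integral_const_mul]
    rw [osc_phi]
    push_cast
    ring
  simp_rw [h1]
  rw [intervalIntegral.integral_const_mul, intervalIntegral.integral_ofReal]
  have h2 : ∫ κ in (0:ℝ)..K, besselJ m (κ * r) * besselJ m (κ * s) * κ =
      K ^ 2 * ∫ p in (0:ℝ)..1, besselJ m (K * p * r) * besselJ m (K * p * s) * p := by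
    have h := intervalIntegral.smul_integral_comp_mul_left (a := 0) (b := 1)
      (fun κ : ℝ => besselJ m (κ * r) * besselJ m (κ * s) * κ) K
    rw [mul_zero, mul_one] at h
    rw [← h, smul_eq_mul, sq, mul_assoc K K, ← intervalIntegral.integral_const_mul K
      (fun p => besselJ m (K * p * r) * besselJ m (K * p * s) * p)]
    congr 2
    ext p
    ring
  rw [h2]
  ring

/-- Fixed-order reduction of the disk-on-disk concentration problem.  If the
radial profile `gr` solves `∫_0^R D_m(r,r') gr(r') r' dr' = λ gr(r)` for every `r ≥ 0`, with
`D_m(r,r') = K² ∫_0^1 J_m(Kpr) J_m(Kpr') p dp`, then `g(r cos θ, r sin θ) = gr(r) cos(mθ)`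
solves the planar Fredholm equation `∫_{‖x'‖≤R} D(x,x') g(x') dx' = λ g(x)` for every `x`,
where `D(x,x') = (2π)⁻² ∫_{‖k‖≤K} e^{i k·(x−x')} dk`. -/
theorem fixed_order_radial_reduction
    (m : ℕ) (K R lam : ℝ) (hK : 0 < K) (hR : 0 < R)
    (gr : ℝ → ℝ)
    (hgrcont : ContinuousOn gr (Set.Ici 0))
    (hgrint : IntegrableOn (fun r => r * gr r) (Set.Icc 0 R))
    (Dm : ℝ → ℝ → ℝ)
    (hDm : ∀ r r', Dm r r' = K ^ 2 *
      ∫ p in (0:ℝ)..1, besselJ m (K * p * r) * besselJ m (K * p * r') * p)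
    (hradial : ∀ r ≥ (0:ℝ), ∫ r' in (0:ℝ)..R, Dm r r' * gr r' * r' = lam * gr r)
    (g : EuclideanSpace ℝ (Fin 2) → ℝ)
    (hgpolar : ∀ r ≥ (0:ℝ), ∀ θ : ℝ, g (polarPt r θ) = gr r * Real.cos (m * θ))
    (D : EuclideanSpace ℝ (Fin 2) → EuclideanSpace ℝ (Fin 2) → ℂ)
    (hD : ∀ x x', D x x' = (((2 * π) ^ 2 : ℝ))⁻¹ •
      ∫ k in Metric.closedBall (0 : EuclideanSpace ℝ (Fin 2)) K,
        Complex.exp (Complex.I * (⟪k, x - x'⟫ : ℝ))) :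
    ∀ x, ∫ x' in Metric.closedBall (0 : EuclideanSpace ℝ (Fin 2)) R,
      D x x' * (g x' : ℂ) = (lam : ℂ) * (g x : ℂ) := by
  intro x
  obtain ⟨r, θ, hr, rfl⟩ := exists_polarPt x
  have hG : Continuous (fun s : ℝ => gr |s|) :=
    hgrcont.comp_continuous continuous_abs (fun s => abs_nonneg s)
  have hDp : ∀ s t : ℝ, D (polarPt r θ) (polarPt s t) = (((2 * π) ^ 2 : ℝ) : ℂ)⁻¹ *
      ∫ κ in (0:ℝ)..K, ∫ φ in (-π)..π, (κ:ℂ) * osc r θ s t κ φ := by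
    intro s t
    rw [hD, integral_ball_polar _ K hK (fun κ φ => osc r θ s t κ φ), Complex.real_smul,
      Complex.ofReal_inv]
    · simp only [Function.uncurry_def, osc]
      fun_prop
    · intro κ _ φ
      rw [inner_sub_right, inner_polarPt, inner_polarPt, osc, ← Complex.exp_add,
        ← Real.cos_neg (φ - t)]
      congr 1
      rw [neg_sub]
      push_cast
      ring
  have hDc : Continuous (fun p : ℝ × ℝ =>
      ∫ κ in (0:ℝ)..K, ∫ φ in (-π)..π, (κ:ℂ) * osc r θ p.1 p.2 κ φ) := by
    apply intervalIntegral.continuous_parametric_intervalIntegral_of_continuous'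
    apply intervalIntegral.continuous_parametric_intervalIntegral_of_continuous'
    simp only [Function.uncurry_def, osc]
    fun_prop
  rw [integral_ball_polar _ R hR (fun s t => (((2 * π) ^ 2 : ℝ) : ℂ)⁻¹ *
      (∫ κ in (0:ℝ)..K, ∫ φ in (-π)..π, (κ:ℂ) * osc r θ s t κ φ) *
      ((gr |s| * Real.cos (m * t) : ℝ) : ℂ))]
  rotate_left
  · simp only [Function.uncurry_def]
    have : Continuous (fun p : ℝ × ℝ => gr |p.1|) := hG.comp continuous_fst
    refine (continuous_const.mul hDc).mul (Complex.continuous_ofReal.comp (this.mul ?_))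
    fun_prop
  · intro s hs t
    rw [hDp, hgpolar s hs, abs_of_nonneg hs]
  have h1 : ∀ s ∈ Set.uIcc 0 R, ∫ t in (-π)..π, (s:ℂ) * ((((2 * π) ^ 2 : ℝ) : ℂ)⁻¹ *
      (∫ κ in (0:ℝ)..K, ∫ φ in (-π)..π, (κ:ℂ) * osc r θ s t κ φ) *
      ((gr |s| * Real.cos (m * t) : ℝ) : ℂ)) =
      (Real.cos (m * θ) : ℂ) * ((Dm r s * gr s * s : ℝ) : ℂ) := by
    intro s hs
    rw [Set.uIcc_of_le hR.le] at hs
    have hk := kernel_theta m K r θ s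
    rw [← hDm] at hk
    simp only [Int.cast_natCast] at hk
    rw [abs_of_nonneg hs.1]
    have e : ∀ t : ℝ, (s:ℂ) * ((((2 * π) ^ 2 : ℝ) : ℂ)⁻¹ *
      (∫ κ in (0:ℝ)..K, ∫ φ in (-π)..π, (κ:ℂ) * osc r θ s t κ φ) *
      ((gr s * Real.cos (m * t) : ℝ) : ℂ)) = ((s:ℂ) * (((2 * π) ^ 2 : ℝ) : ℂ)⁻¹ * gr s) *
      ((∫ κ in (0:ℝ)..K, ∫ φ in (-π)..π, (κ:ℂ) * osc r θ s t κ φ) * (Real.cos (m * t) : ℂ)) := by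
      intro t
      rw [Complex.ofReal_mul]
      ring
    simp_rw [e]
    rw [intervalIntegral.integral_const_mul, hk]
    have hpi : (π : ℂ) ≠ 0 := Complex.ofReal_ne_zero.mpr Real.pi_ne_zero
    push_cast
    field_simp
  rw [intervalIntegral.integral_congr h1, intervalIntegral.integral_const_mul,
    intervalIntegral.integral_ofReal, hradial r hr, hgpolar r hr]
  push_cast
  ring
end
end

section
/- One-dimensional equivalence of the spectral and time-domain concentration equations. Let T, W > 0 and λ ∈ ℝ. Suppose G : [−W, W] → ℂ is integrable and satisfies ∫_{−W}^{W} D(ω,ω') G(ω') dω' = λ G(ω) for almost every ω with |ω| ≤ W, where D(ω,ω') = sin[T(ω−ω')]/(π(ω−ω')) (with diagonal value T/π). Then the bandlimited function g(t) = (2π)^{-1} ∫_{−W}^{W} G(ω) e^{iωt} dω satisfies ∫_{−T}^{T} D(t,t') g(t') dt' = λ g(t) for every t ∈ ℝ, where D(t,t') = sin[W(t−t')]/(π(t−t')) (with diagonal value W/π). -/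
open MeasureTheory Real Complex

noncomputable section

/-- The sinc concentration kernel `sin(a(s−s'))/(π(s−s'))`, extended continuously by the
value `a/π` on the diagonal. -/
def sincKernel (a s s' : ℝ) : ℝ :=
  if s = s' then a / π else Real.sin (a * (s - s')) / (π * (s - s'))

lemma sincKernel_eq_integral (a s s' : ℝ) :
    (sincKernel a s s' : ℂ) =
      (2 * π : ℂ)⁻¹ * ∫ x in (-a)..a, Complex.exp (Complex.I * x * (s - s')) := by
  have hpi : (π : ℂ) ≠ 0 := by exact_mod_cast Real.pi_ne_zero
  unfold sincKernel
  split_ifs with h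
  · subst h
    simp
    field_simp
    ring
  · have hne : (s : ℂ) - s' ≠ 0 := by
      rw [sub_ne_zero]; exact_mod_cast h
    have hc : Complex.I * ((s : ℂ) - s') ≠ 0 := mul_ne_zero Complex.I_ne_zero hne
    have h1 : ∀ x : ℝ, Complex.exp (Complex.I * x * (s - s')) =
        Complex.exp (Complex.I * ((s : ℂ) - s') * x) := fun x => by congr 1; ring
    simp_rw [h1]
    rw [integral_exp_mul_complex hc]
    push_cast
    rw [Complex.sin]
    have e1 : -((a : ℂ) * (s - s')) * Complex.I = Complex.I * (s - s') * -a := by ring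
    have e2 : ((a : ℂ) * (s - s')) * Complex.I = Complex.I * (s - s') * a := by ring
    rw [e1, e2]
    field_simp
    rw [Complex.I_sq]
    ring

lemma continuous_sincKernel (a : ℝ) :
    Continuous (fun p : ℝ × ℝ => sincKernel a p.1 p.2) := by
  have : (fun p : ℝ × ℝ => sincKernel a p.1 p.2) =
      fun p : ℝ × ℝ => a / π * Real.sinc (a * (p.1 - p.2)) := by
    ext p
    unfold sincKernel
    split_ifs with h
    · simp [h]
    · have hne : p.1 - p.2 ≠ 0 := sub_ne_zero.2 h
      by_cases ha : a = 0
      · simp [ha]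
      · rw [Real.sinc_of_ne_zero (mul_ne_zero ha hne)]
        field_simp
  rw [this]
  have := Real.continuous_sinc
  fun_prop

lemma fubini_helper {F : ℝ → ℝ → ℂ} (hF : Continuous (Function.uncurry F)) {G : ℝ → ℂ}
    {a b c d : ℝ} (hG : IntegrableOn G (Set.uIoc c d)) :
    ∫ x in a..b, ∫ y in c..d, F x y * G y = ∫ y in c..d, (∫ x in a..b, F x y) * G y := by
  rw [intervalIntegral_intervalIntegral_swap]
  · simp_rw [intervalIntegral.integral_mul_const]
  · obtain ⟨C, hC⟩ := ((isCompact_uIcc (a := a) (b := b)).prod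
      (isCompact_uIcc (a := c) (b := d))).exists_bound_of_continuousOn hF.continuousOn
    unfold IntegrableOn
    have hI : Integrable (fun p : ℝ × ℝ => G p.2)
        (volume.restrict (Set.uIoc a b ×ˢ Set.uIoc c d)) := by
      rw [Measure.volume_eq_prod, ← Measure.prod_restrict]
      have : IsFiniteMeasure (volume.restrict (Set.uIoc a b)) := by
        unfold Set.uIoc; infer_instance
      exact Integrable.comp_snd hG _
    refine hI.bdd_mul (c := C) hF.aestronglyMeasurable ?_
    refine (ae_restrict_iff' (measurableSet_uIoc.prod measurableSet_uIoc)).2 (.of_forall ?_)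
    intro p hp
    exact hC p ⟨Set.uIoc_subset_uIcc hp.1, Set.uIoc_subset_uIcc hp.2⟩

lemma kernel_duality (T W t w : ℝ) :
    ∫ x in (-W)..W, (sincKernel T x w : ℂ) * Complex.exp (Complex.I * x * t) =
      ∫ y in (-T)..T, (sincKernel W t y : ℂ) * Complex.exp (Complex.I * w * y) := by
  have hsymm : ∀ x, sincKernel T x w = sincKernel T w x := by
    intro x
    unfold sincKernel
    by_cases h : x = w
    · simp [h]
    · rw [if_neg h, if_neg (Ne.symm h), ← neg_sub w x, mul_neg, mul_neg, Real.sin_neg,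
        neg_div_neg_eq]
  simp_rw [hsymm, sincKernel_eq_integral, mul_assoc, intervalIntegral.integral_const_mul,
    ← intervalIntegral.integral_mul_const]
  congr 1
  rw [intervalIntegral_intervalIntegral_swap]
  · refine intervalIntegral.integral_congr fun y _ => intervalIntegral.integral_congr fun x _ => ?_
    simp only [← Complex.exp_add]
    congr 1
    ring
  · have : Continuous (Function.uncurry fun x y : ℝ =>
      Complex.exp (Complex.I * (y * (w - x))) * Complex.exp (Complex.I * (x * t))) := by
      unfold Function.uncurry
      fun_prop
    exact (this.continuousOn.integrableOn_compact (isCompact_uIcc.prod isCompact_uIcc)).mono_set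
      (Set.prod_mono Set.uIoc_subset_uIcc Set.uIoc_subset_uIcc)

/-- If `G`, integrable on `[−W,W]`, solves the spectral-domain concentration
equation `∫_{−W}^W sin[T(ω−ω')]/(π(ω−ω')) G(ω') dω' = λ G(ω)` for a.e. `|ω| ≤ W`, then the
bandlimited function `g(t) = (2π)⁻¹ ∫_{−W}^W G(ω) e^{iωt} dω` solves the time-domain
equation `∫_{−T}^T sin[W(t−t')]/(π(t−t')) g(t') dt' = λ g(t)` for every `t ∈ ℝ`. -/
theorem one_dim_spectral_to_time_fredholm
    (T W lam : ℝ) (hT : 0 < T) (hW : 0 < W)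
    (G : ℝ → ℂ)
    (hGint : IntegrableOn G (Set.Icc (-W) W))
    (hFred : ∀ᵐ ω ∂(volume.restrict (Set.Icc (-W) W)),
      ∫ ω' in (-W)..W, (sincKernel T ω ω' : ℂ) * G ω' = (lam : ℂ) * G ω)
    (g : ℝ → ℂ)
    (hg : ∀ t : ℝ, g t = ((2 * π : ℝ))⁻¹ •
      ∫ ω in (-W)..W, G ω * Complex.exp (Complex.I * ω * t)) :
    ∀ t : ℝ, ∫ t' in (-T)..T, (sincKernel W t t' : ℂ) * g t' = (lam : ℂ) * g t := by
  intro t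
  have hle : -W ≤ W := by linarith
  have hG' : IntegrableOn G (Set.uIoc (-W) W) := by
    rw [Set.uIoc_of_le hle]
    exact hGint.mono_set Set.Ioc_subset_Icc_self
  have hFred' : ∀ᵐ ω, ω ∈ Set.uIoc (-W) W →
      ∫ ω' in (-W)..W, (sincKernel T ω ω' : ℂ) * G ω' = (lam : ℂ) * G ω := by
    have := (ae_restrict_iff' measurableSet_Icc).1 hFred
    filter_upwards [this] with ω h hω
    rw [Set.uIoc_of_le hle] at hω
    exact h (Set.Ioc_subset_Icc_self hω)
  have hR : (lam : ℂ) * ∫ ω in (-W)..W, G ω * Complex.exp (Complex.I * ω * t) =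
      ∫ ω' in (-W)..W, (∫ ω in (-W)..W,
        (sincKernel T ω ω' : ℂ) * Complex.exp (Complex.I * ω * t)) * G ω' := by
    rw [← fubini_helper _ hG', ← intervalIntegral.integral_const_mul]
    · refine intervalIntegral.integral_congr_ae ?_
      filter_upwards [hFred'] with ω h hω
      rw [← mul_assoc, ← h hω, ← intervalIntegral.integral_mul_const]
      refine intervalIntegral.integral_congr fun y _ => ?_
      beta_reduce
      ring
    · have := continuous_sincKernel T
      unfold Function.uncurry
      fun_prop
  have hL : ∫ t' in (-T)..T, (sincKernel W t t' : ℂ) *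
        ∫ ω in (-W)..W, G ω * Complex.exp (Complex.I * ω * t') =
      ∫ ω' in (-W)..W, (∫ t' in (-T)..T,
        (sincKernel W t t' : ℂ) * Complex.exp (Complex.I * ω' * t')) * G ω' := by
    rw [← fubini_helper _ hG']
    · refine intervalIntegral.integral_congr fun y _ => ?_
      beta_reduce
      rw [← intervalIntegral.integral_const_mul]
      refine intervalIntegral.integral_congr fun x _ => ?_
      beta_reduce
      ring
    · have h0 := continuous_sincKernel W
      have h1 : Continuous fun p : ℝ × ℝ => sincKernel W t p.1 :=
        h0.comp (continuous_const.prodMk continuous_fst)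
      unfold Function.uncurry
      fun_prop
  simp_rw [hg, mul_smul_comm, intervalIntegral.integral_smul]
  rw [hL, hR]
  simp_rw [kernel_duality]
end
end

section
/- Slepian's commuting tridiagonal matrix for the discrete prolate spheroidal sequences. Fix an integer N ≥ 1 and a real W. Define two N×N real matrices indexed by x, y ∈ {0, 1, …, N−1}: the sinc (concentration) matrix A with A_{xy} = sin[2πW(x−y)]/(π(x−y)) for x ≠ y and A_{xx} = 2W, and the symmetric tridiagonal matrix T with diagonal entries T_{xx} = [(N−1−2x)/2]² cos(2πW), off-diagonal entries T_{x,x+1} = T_{x+1,x} = (x+1)(N−x−1)/2, and all other entries zero. Then A and T commute: A·T = T·A. Consequently the discrete prolate spheroidal sequences, the eigenvectors of A, can be computed stably as eigenvectors of the tridiagonal matrix T. -/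
open Real Matrix

noncomputable section

/-- Sum of a tridiagonal row whose boundary coefficients vanish. -/
lemma tridiag_sum (N : ℕ) (C : ℝ) (x : ℕ) (hx : x < N) (f : ℤ → ℝ) :
    ∑ k : Fin N, (if x = (k : ℕ) then (((N : ℝ) - 1 - 2 * (x : ℝ)) / 2) ^ 2 * C
      else if (k : ℕ) = x + 1 then ((x : ℝ) + 1) * ((N : ℝ) - (x : ℝ) - 1) / 2
      else if x = (k : ℕ) + 1 then ((k : ℝ) + 1) * ((N : ℝ) - (k : ℝ) - 1) / 2
      else 0) * f (k : ℕ) =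
    (((N : ℝ) - 1 - 2 * (x : ℝ)) / 2) ^ 2 * C * f x
      + ((x : ℝ) + 1) * ((N : ℝ) - (x : ℝ) - 1) / 2 * f (x + 1)
      + (x : ℝ) * ((N : ℝ) - (x : ℝ)) / 2 * f (x - 1) := by
  rw [Fin.sum_univ_eq_sum_range (fun k : ℕ =>
    (if x = k then (((N : ℝ) - 1 - 2 * (x : ℝ)) / 2) ^ 2 * C
      else if k = x + 1 then ((x : ℝ) + 1) * ((N : ℝ) - (x : ℝ) - 1) / 2
      else if x = k + 1 then ((k : ℝ) + 1) * ((N : ℝ) - (k : ℝ) - 1) / 2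
      else 0) * f (k : ℕ)) N]
  have key : ∀ k ∈ Finset.range N,
      (if x = k then (((N : ℝ) - 1 - 2 * (x : ℝ)) / 2) ^ 2 * C
      else if k = x + 1 then ((x : ℝ) + 1) * ((N : ℝ) - (x : ℝ) - 1) / 2
      else if x = k + 1 then ((k : ℝ) + 1) * ((N : ℝ) - (k : ℝ) - 1) / 2
      else 0) * f (k : ℕ) =
      (if k = x then (((N : ℝ) - 1 - 2 * (x : ℝ)) / 2) ^ 2 * C * f x else 0)
      + (if k = x + 1 then ((x : ℝ) + 1) * ((N : ℝ) - (x : ℝ) - 1) / 2 * f (x + 1) else 0)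
      + (if k = x - 1 then (x : ℝ) * ((N : ℝ) - (x : ℝ)) / 2 * f (x - 1) else 0) := by
    intro k _
    by_cases h1 : x = k
    · subst h1
      rcases Nat.eq_zero_or_pos x with h | h
      · subst h; simp
      · rw [if_pos rfl, if_pos rfl, if_neg (by omega), if_neg (by omega)]; ring
    · by_cases h2 : k = x + 1
      · subst h2
        rw [if_neg h1, if_pos rfl, if_neg (by omega), if_pos rfl, if_neg (by omega)]
        push_cast; ring
      · by_cases h3 : x = k + 1
        · subst h3
          rw [if_neg h1, if_neg h2, if_pos rfl, if_neg (by omega), if_neg h2, if_pos (by omega)]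
          push_cast
          rw [add_sub_cancel_right]; ring
        · rw [if_neg h1, if_neg h2, if_neg h3, if_neg (by omega), if_neg h2, if_neg (by omega)]
          ring
  rw [Finset.sum_congr rfl key, Finset.sum_add_distrib, Finset.sum_add_distrib,
    Finset.sum_ite_eq', Finset.sum_ite_eq', Finset.sum_ite_eq',
    if_pos (Finset.mem_range.2 hx), if_pos (Finset.mem_range.2 (by omega : x - 1 < N))]
  by_cases h : x + 1 < N
  · rw [if_pos (Finset.mem_range.2 h)]
  · have : (N : ℝ) = x + 1 := by exact_mod_cast (by omega : N = x + 1)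
    rw [if_neg (by simpa using h), this]; ring

/-- The sinc kernel on the integers. -/
def sincKer (W : ℝ) (d : ℤ) : ℝ :=
  if d = 0 then 2 * W else Real.sin (2 * π * W * (d : ℝ)) / (π * (d : ℝ))

lemma sincKer_mul (W : ℝ) (d : ℤ) :
    (d : ℝ) * sincKer W d = Real.sin (2 * π * W * (d : ℝ)) / π := by
  unfold sincKer
  split_ifs with h
  · subst h; simp
  · have : (d : ℝ) ≠ 0 := by exact_mod_cast h
    have := Real.pi_ne_zero
    field_simp

lemma sincKer_rec (W : ℝ) (d : ℤ) :
    ((d : ℝ) + 1) * sincKer W (d + 1) + ((d : ℝ) - 1) * sincKer W (d - 1)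
      = 2 * Real.cos (2 * π * W) * ((d : ℝ) * sincKer W d) := by
  have h1 := sincKer_mul W (d + 1)
  have h2 := sincKer_mul W (d - 1)
  push_cast at h1 h2
  rw [h1, h2, sincKer_mul, mul_add, mul_sub, mul_one, Real.sin_add, Real.sin_sub]
  ring

/-- Slepian's commuting tridiagonal matrix for the discrete prolate
spheroidal sequences.  For `N ≥ 1` and `W : ℝ`, the `N×N` sinc concentration matrix `A`
with `A_{xy} = sin[2πW(x−y)]/(π(x−y))` (diagonal value `2W`) commutes with the symmetric
tridiagonal matrix `T` with `T_{xx} = [(N−1−2x)/2]² cos(2πW)` and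
`T_{x,x+1} = T_{x+1,x} = (x+1)(N−x−1)/2`: `A·T = T·A`.  Hence the dpss, the eigenvectors
of `A`, can be computed stably as eigenvectors of `T`. -/
theorem dpss_tridiagonal_commutes
    (N : ℕ) (hN : 1 ≤ N) (W : ℝ)
    (A T : Matrix (Fin N) (Fin N) ℝ)
    (hA : ∀ x y : Fin N, A x y =
      if x = y then 2 * W
      else Real.sin (2 * π * W * ((x : ℝ) - (y : ℝ))) / (π * ((x : ℝ) - (y : ℝ))))
    (hT : ∀ x y : Fin N, T x y =
      if x = y then (((N : ℝ) - 1 - 2 * (x : ℝ)) / 2) ^ 2 * Real.cos (2 * π * W)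
      else if (y : ℕ) = (x : ℕ) + 1 then ((x : ℝ) + 1) * ((N : ℝ) - (x : ℝ) - 1) / 2
      else if (x : ℕ) = (y : ℕ) + 1 then ((y : ℝ) + 1) * ((N : ℝ) - (y : ℝ) - 1) / 2
      else 0) :
    A * T = T * A := by
  have hA' : ∀ x y : Fin N, A x y = sincKer W (((x : ℕ) : ℤ) - ((y : ℕ) : ℤ)) := by
    intro x y
    rw [hA]; unfold sincKer
    have : (x = y) ↔ (((x : ℕ) : ℤ) - ((y : ℕ) : ℤ) = 0) := by
      rw [Fin.ext_iff]; omega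
    simp only [this]; push_cast; rfl
  have hT' : ∀ x y : Fin N, T x y = T y x := by
    intro x y
    rw [hT, hT]
    by_cases h : x = y
    · subst h; rfl
    · have h' : ¬ y = x := fun e => h e.symm
      simp only [h, h', if_false]
      split_ifs <;> first | rfl | omega
  ext x y
  rw [Matrix.mul_apply, Matrix.mul_apply]
  have e1 := tridiag_sum N (Real.cos (2 * π * W)) x x.2 (fun k => sincKer W (k - ((y : ℕ) : ℤ)))
  have e2 := tridiag_sum N (Real.cos (2 * π * W)) y y.2 (fun k => sincKer W (((x : ℕ) : ℤ) - k))
  refine Eq.trans (Finset.sum_congr rfl fun k _ => ?_)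
    (e2.trans (Eq.trans ?_ (e1.symm.trans (Finset.sum_congr rfl fun k _ => ?_))))
  · rw [hA', hT' k y, hT, mul_comm]; simp only [Fin.ext_iff]
  swap
  · rw [hA', hT]; simp only [Fin.ext_iff]
  have r := sincKer_rec W (((x : ℕ) : ℤ) - ((y : ℕ) : ℤ))
  have q1 : ((x : ℕ) : ℤ) + 1 - ((y : ℕ) : ℤ) = ((x : ℕ) : ℤ) - ((y : ℕ) : ℤ) + 1 := by ring
  have q2 : ((x : ℕ) : ℤ) - 1 - ((y : ℕ) : ℤ) = ((x : ℕ) : ℤ) - ((y : ℕ) : ℤ) - 1 := by ring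
  have q3 : ((x : ℕ) : ℤ) - (((y : ℕ) : ℤ) + 1) = ((x : ℕ) : ℤ) - ((y : ℕ) : ℤ) - 1 := by ring
  have q4 : ((x : ℕ) : ℤ) - (((y : ℕ) : ℤ) - 1) = ((x : ℕ) : ℤ) - ((y : ℕ) : ℤ) + 1 := by ring
  simp only [q1, q2, q3, q4]
  push_cast at r
  linear_combination (-((N : ℝ) - 1 - (x : ℕ) - (y : ℕ)) / 2) * r
end
end
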